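/- Let n ≥ 1, let r ≥ 1 be an integer, and let 0 < c₁ ≤ 1. There is a constant C = C(n, r, c₁) such that the following holds. Let T ⊂ ℝⁿ be a shape-regular element with parameters (x₀, h, c₁), let d > 0 satisfy h ≤ d, let ω : ℝⁿ → ℝ be a C^∞ function satisfying |ω|_{W^j_∞(T)} ≤ d^{−j} for j = 0 and j = 1, let χ : ℝⁿ → ℝ be a polynomial function of total degree at most r − 1, and set ω̂ := (1/|T|) ∫_T ω dx, where |T| denotes the Lebesgue measure of T. Then ‖∇((ω̂ − ω)χ)‖_{L²(T)} ≤ C d^{−1} ‖χ‖_{L²(T)}. (Estimate (2.6) in the proof of the improved superapproximation theorem.) -/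

import Mathlib

/-!
By the product rule, `∇((ω̂ - ω)χ) = (ω̂ - ω)∇χ - χ∇ω` on `T`. Since `T` is convex and contained in
a ball of radius `h`, the mean value inequality gives `|ω̂ - ω| ≤ 2h/d` on `T` (`abs_mean_sub_le`),
and `‖∇ω‖ ≤ 1/d` by assumption. So everything reduces to the inverse inequality
`h ‖∇χ‖_{L²(T)} ≤ K ‖χ‖_{L²(T)}` for polynomials of bounded degree (`element_inverse_estimate`).

On the finite-dimensional space of polynomials of degree at most `k`, the `L²` norm on the ball
`B(0, c₁)` dominates the supremum of the gradient on the closed unit ball, because restriction to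
`L²(B(0, c₁))` is injective (`reference_inverse_estimate`). The affine map `y ↦ x₀ + h y` transports
this to the pair `B(x₀, c₁h) ⊆ closedBall x₀ h`. As `T` lies between these two balls, integrating
the pointwise bound over the larger ball gives the inverse inequality with a constant that does not
depend on the shape of `T`.
-/

open MeasureTheory Metric

/-- The `L²(S)` norm of a scalar function on `ℝⁿ`. -/
noncomputable def L2norm {n : ℕ} (S : Set (EuclideanSpace ℝ (Fin n)))
    (f : EuclideanSpace ℝ (Fin n) → ℝ) : ℝ :=
  (∫ x in S, f x ^ 2) ^ (1 / 2 : ℝ)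

/-- The `L²(S)` norm of the gradient of a scalar function on `ℝⁿ` (the norm of the
Fréchet derivative coincides with the Euclidean norm of the gradient). -/
noncomputable def gradL2norm {n : ℕ} (S : Set (EuclideanSpace ℝ (Fin n)))
    (f : EuclideanSpace ℝ (Fin n) → ℝ) : ℝ :=
  (∫ x in S, ‖fderiv ℝ f x‖ ^ 2) ^ (1 / 2 : ℝ)

/-- The `H¹(S)` norm. -/
noncomputable def H1norm {n : ℕ} (S : Set (EuclideanSpace ℝ (Fin n)))
    (f : EuclideanSpace ℝ (Fin n) → ℝ) : ℝ :=
  (L2norm S f ^ 2 + gradL2norm S f ^ 2) ^ (1 / 2 : ℝ)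

/-- The `W^j_∞(S)` seminorm: `sup_{x ∈ S} ‖D^j f(x)‖`. -/
noncomputable def WInf {n : ℕ} (j : ℕ) (S : Set (EuclideanSpace ℝ (Fin n)))
    (f : EuclideanSpace ℝ (Fin n) → ℝ) : ℝ :=
  ⨆ x ∈ S, ‖iteratedFDeriv ℝ j f x‖

/-- A shape-regular element with parameters `(x₀, h, c₁)`: a bounded convex set containing
`B(x₀, c₁ h)` and contained in the closed ball of center `x₀` and radius `h`. -/
def IsShapeReg {n : ℕ} (T : Set (EuclideanSpace ℝ (Fin n))) (x₀ : EuclideanSpace ℝ (Fin n))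
    (h c₁ : ℝ) : Prop :=
  Convex ℝ T ∧ Bornology.IsBounded T ∧ ball x₀ (c₁ * h) ⊆ T ∧ T ⊆ closedBall x₀ h

/-- `f` is a polynomial function of total degree at most `k`. -/
def IsPolyDeg {n : ℕ} (f : EuclideanSpace ℝ (Fin n) → ℝ) (k : ℕ) : Prop :=
  ∃ p : MvPolynomial (Fin n) ℝ, p.totalDegree ≤ k ∧
    ∀ x : EuclideanSpace ℝ (Fin n), f x = MvPolynomial.eval (fun i => x i) p


/-! ### Polynomial functions and their L² and gradient maps -/

/-- The polynomial function on Euclidean space attached to a multivariate polynomial. -/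
noncomputable def polyFun {n : ℕ} (p : MvPolynomial (Fin n) ℝ) (x : EuclideanSpace ℝ (Fin n)) : ℝ :=
  MvPolynomial.eval (fun i => x i) p

theorem polyFun_analytic {n : ℕ} (p : MvPolynomial (Fin n) ℝ) :
    AnalyticOnNhd ℝ (polyFun p) Set.univ := by
  have h := AnalyticOnNhd.aeval_mvPolynomial (𝕜 := ℝ) (s := Set.univ)
    (f := fun (x : EuclideanSpace ℝ (Fin n)) i => x i)
    (fun i => (EuclideanSpace.proj (𝕜 := ℝ) i).analyticOnNhd _) p
  simp only [MvPolynomial.aeval_eq_eval] at h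
  exact h

theorem polyFun_contDiff {n : ℕ} (p : MvPolynomial (Fin n) ℝ) : ContDiff ℝ 1 (polyFun p) :=
  (polyFun_analytic p).contDiff

theorem polyFun_differentiable {n : ℕ} (p : MvPolynomial (Fin n) ℝ) :
    Differentiable ℝ (polyFun p) :=
  (polyFun_contDiff p).differentiable one_ne_zero

theorem polyFun_add {n : ℕ} (p q : MvPolynomial (Fin n) ℝ) :
    polyFun (p + q) = polyFun p + polyFun q := by
  ext x; simp [polyFun]

theorem polyFun_smul {n : ℕ} (a : ℝ) (p : MvPolynomial (Fin n) ℝ) :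
    polyFun (a • p) = a • polyFun p := by
  ext x; simp [polyFun, MvPolynomial.smul_eval]

/-- A polynomial vanishing almost everywhere on a ball is zero, by analytic continuation. -/
theorem eq_zero_of_polyFun_ae_zero {n : ℕ} {c : ℝ} (hc : 0 < c) {p : MvPolynomial (Fin n) ℝ}
    (hp : polyFun p =ᵐ[volume.restrict (ball 0 c)] 0) : p = 0 := by
  have h1 : Set.EqOn (polyFun p) 0 (ball 0 c) :=
    Measure.eqOn_open_of_ae_eq hp isOpen_ball
      (polyFun_contDiff p).continuous.continuousOn continuousOn_const
  have h2 : Set.EqOn (polyFun p) 0 Set.univ :=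
    (polyFun_analytic p).eqOn_zero_of_preconnected_of_eventuallyEq_zero isPreconnected_univ
      (Set.mem_univ 0) (h1.eventuallyEq_of_mem (ball_mem_nhds 0 hc))
  refine MvPolynomial.funext fun y => ?_
  simpa [polyFun] using h2 (Set.mem_univ (WithLp.toLp 2 y))

theorem memLp_polyFun {n : ℕ} (c : ℝ) (p : MvPolynomial (Fin n) ℝ) :
    MemLp (polyFun p) 2 (volume.restrict (ball 0 c)) := by
  rw [memLp_two_iff_integrable_sq (polyFun_contDiff p).continuous.aestronglyMeasurable]
  have : Continuous fun x => polyFun p x ^ 2 := (polyFun_contDiff p).continuous.pow 2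
  exact (this.continuousOn.integrableOn_compact (isCompact_closedBall 0 c)).mono_set
    ball_subset_closedBall

/-- The restriction map from polynomials to `L²` of the ball of radius `c`. -/
noncomputable def toL2 (n : ℕ) (c : ℝ) : MvPolynomial (Fin n) ℝ →ₗ[ℝ]
    Lp ℝ 2 ((volume : Measure (EuclideanSpace ℝ (Fin n))).restrict (ball 0 c)) where
  toFun p := (memLp_polyFun c p).toLp _
  map_add' p q := by
    rw [← MemLp.toLp_add]
    exact MemLp.toLp_congr _ _ (by rw [polyFun_add])
  map_smul' a p := by
    rw [RingHom.id_apply, ← MemLp.toLp_const_smul]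
    exact MemLp.toLp_congr _ _ (by rw [polyFun_smul])

theorem norm_toL2_sq {n : ℕ} (c : ℝ) (p : MvPolynomial (Fin n) ℝ) :
    ‖toL2 n c p‖ ^ 2 = ∫ x in ball 0 c, polyFun p x ^ 2 := by
  rw [← real_inner_self_eq_norm_sq, L2.inner_def]
  refine integral_congr_ae ?_
  filter_upwards [(memLp_polyFun c p).coeFn_toLp] with x hx
  have : (toL2 n c p : EuclideanSpace ℝ (Fin n) → ℝ) x = polyFun p x := hx
  rw [this]
  simp [pow_two]

theorem toL2_injective {n : ℕ} {c : ℝ} (hc : 0 < c) : Function.Injective (toL2 n c) := by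
  rw [injective_iff_map_eq_zero]
  intro p hp
  refine eq_zero_of_polyFun_ae_zero hc ?_
  have h1 := (memLp_polyFun c p).coeFn_toLp
  have h2 : ((memLp_polyFun c p).toLp _ : Lp ℝ 2 _) = 0 := hp
  rw [h2] at h1
  exact h1.symm.trans (Lp.coeFn_zero _ _ _)

/-- The gradient map from polynomials to continuous covector fields on the closed unit ball. -/
noncomputable def gradC (n : ℕ) : MvPolynomial (Fin n) ℝ →ₗ[ℝ]
    C(closedBall (0 : EuclideanSpace ℝ (Fin n)) 1, EuclideanSpace ℝ (Fin n) →L[ℝ] ℝ) where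
  toFun p := ⟨fun x => fderiv ℝ (polyFun p) x,
    ((polyFun_contDiff p).continuous_fderiv one_ne_zero).comp continuous_subtype_val⟩
  map_add' p q := by
    ext1 x
    simp [polyFun_add, fderiv_add (polyFun_differentiable p _) (polyFun_differentiable q _)]
  map_smul' a p := by
    ext1 x
    simp [polyFun_smul, fderiv_const_smul (polyFun_differentiable p _)]

/-! ### The inverse inequality for polynomials -/

/-- On a finite-dimensional space, every linear map is bounded by any injective one. -/
theorem exists_bound_of_injective {V E F : Type*} [AddCommGroup V] [Module ℝ V]
    [Module.Finite ℝ V] [NormedAddCommGroup E] [NormedSpace ℝ E] [NormedAddCommGroup F]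
    [NormedSpace ℝ F] (L : V →ₗ[ℝ] E) (hL : Function.Injective L) (M : V →ₗ[ℝ] F) :
    ∃ K : ℝ, 0 < K ∧ ∀ v, ‖M v‖ ≤ K * ‖L v‖ := by
  let e := LinearEquiv.ofInjective L hL
  let N := (M ∘ₗ e.symm.toLinearMap).toContinuousLinearMap
  refine ⟨‖N‖ + 1, by positivity, fun v => ?_⟩
  have h1 : N (e v) = M v := by simp [N]
  have h2 : ‖e v‖ = ‖L v‖ := rfl
  rw [← h1, ← h2]
  refine (N.le_opNorm _).trans ?_
  gcongr
  linarith

/-- Inverse estimate on the reference configuration `B(0, c) ⊆ B(0, 1)`. -/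
theorem reference_inverse_estimate (n k : ℕ) {c : ℝ} (hc : 0 < c) :
    ∃ K : ℝ, 0 < K ∧ ∀ p : MvPolynomial (Fin n) ℝ, p.totalDegree ≤ k →
      ∀ x ∈ closedBall (0 : EuclideanSpace ℝ (Fin n)) 1,
        ‖fderiv ℝ (polyFun p) x‖ ^ 2 ≤ K * ∫ y in ball 0 c, polyFun p y ^ 2 := by
  have : CompactSpace (closedBall (0 : EuclideanSpace ℝ (Fin n)) 1) :=
    isCompact_iff_compactSpace.1 (isCompact_closedBall _ _)
  obtain ⟨K, hK, h⟩ := exists_bound_of_injective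
    (F := C(closedBall (0 : EuclideanSpace ℝ (Fin n)) 1, EuclideanSpace ℝ (Fin n) →L[ℝ] ℝ))
    ((toL2 n c).domRestrict (MvPolynomial.restrictTotalDegree (Fin n) ℝ k))
    ((toL2_injective hc).comp Subtype.val_injective)
    ((gradC n).domRestrict (MvPolynomial.restrictTotalDegree (Fin n) ℝ k))
  refine ⟨K ^ 2, by positivity, fun p hp x hx => ?_⟩
  have h1 : ‖gradC n p‖ ≤ K * ‖toL2 n c p‖ :=
    h ⟨p, (MvPolynomial.mem_restrictTotalDegree _ _ _).2 hp⟩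
  have h2 : ‖fderiv ℝ (polyFun p) x‖ ≤ ‖gradC n p‖ := (gradC n p).norm_coe_le_norm ⟨x, hx⟩
  rw [← norm_toL2_sq, ← mul_pow]
  exact pow_le_pow_left₀ (norm_nonneg _) (h2.trans h1) 2

/-- Polynomials of bounded degree are stable under the affine rescaling `y ↦ x₀ + h y`. -/
theorem exists_polyFun_comp_affine {n k : ℕ} (p : MvPolynomial (Fin n) ℝ)
    (hp : p.totalDegree ≤ k) (x₀ : EuclideanSpace ℝ (Fin n)) (h : ℝ) :
    ∃ q : MvPolynomial (Fin n) ℝ, q.totalDegree ≤ k ∧ ∀ y, polyFun q y = polyFun p (x₀ + h • y) := by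
  classical
  let g : Fin n → MvPolynomial (Fin n) ℝ :=
    fun i => MvPolynomial.C (x₀ i) + MvPolynomial.C h * MvPolynomial.X i
  have hg : ∀ i, (g i).totalDegree ≤ 1 := by
    intro i
    refine (MvPolynomial.totalDegree_add _ _).trans (max_le (by simp) ?_)
    refine (MvPolynomial.totalDegree_mul _ _).trans ?_
    simp [MvPolynomial.totalDegree_X]
  refine ⟨MvPolynomial.bind₁ g p, ?_, fun y => ?_⟩
  · rw [MvPolynomial.bind₁, MvPolynomial.aeval_def, MvPolynomial.eval₂_eq]
    refine MvPolynomial.totalDegree_finsetSum_le fun m hm => ?_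
    refine (MvPolynomial.totalDegree_mul _ _).trans ?_
    have h1 : (algebraMap ℝ (MvPolynomial (Fin n) ℝ) (p.coeff m)).totalDegree = 0 :=
      MvPolynomial.totalDegree_C _
    rw [h1, zero_add]
    refine (MvPolynomial.totalDegree_finsetProd _ _).trans ?_
    refine le_trans (Finset.sum_le_sum (g := fun i => m i) fun i _ => ?_)
      ((MvPolynomial.le_totalDegree hm).trans hp)
    exact (MvPolynomial.totalDegree_pow _ _).trans
      ((Nat.mul_le_mul_left _ (hg i)).trans (mul_one _).le)
  · have h1 : (fun i => MvPolynomial.eval (fun i => y i) (g i)) = fun i => (x₀ + h • y) i := by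
      funext i; simp [g]
    rw [polyFun, polyFun, ← h1]
    simp only [← MvPolynomial.aeval_eq_eval]
    exact MvPolynomial.aeval_bind₁ _ _ _

/-- The scaled inverse estimate: `‖∇χ(x)‖²` on the circumscribed ball is controlled by
`h^{-(n+2)}` times the integral of `χ²` over the inscribed ball. -/
theorem scaled_inverse_estimate (n k : ℕ) {c : ℝ} (hc : 0 < c) :
    ∃ K : ℝ, 0 < K ∧ ∀ p : MvPolynomial (Fin n) ℝ, p.totalDegree ≤ k →
      ∀ (x₀ : EuclideanSpace ℝ (Fin n)) (h : ℝ), 0 < h → ∀ x ∈ closedBall x₀ h,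
        h ^ n * (h ^ 2 * ‖fderiv ℝ (polyFun p) x‖ ^ 2) ≤
          K * ∫ y in ball x₀ (c * h), polyFun p y ^ 2 := by
  obtain ⟨K, hK, H⟩ := reference_inverse_estimate n k hc
  refine ⟨K, hK, fun p hp x₀ h hh x hx => ?_⟩
  obtain ⟨q, hq, hqp⟩ := exists_polyFun_comp_affine p hp x₀ h
  have hx' : h⁻¹ • (x - x₀) ∈ closedBall (0 : EuclideanSpace ℝ (Fin n)) 1 := by
    rw [mem_closedBall_zero_iff, norm_smul, norm_inv, Real.norm_of_nonneg hh.le,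
      inv_mul_le_iff₀ hh, mul_one, ← dist_eq_norm]
    exact hx
  have hxx : x₀ + h • h⁻¹ • (x - x₀) = x := by
    rw [smul_inv_smul₀ hh.ne']; abel
  have hfd : fderiv ℝ (polyFun q) (h⁻¹ • (x - x₀)) = h • fderiv ℝ (polyFun p) x := by
    have h1 : HasFDerivAt (fun y : EuclideanSpace ℝ (Fin n) => x₀ + h • y)
        (h • ContinuousLinearMap.id ℝ _) (h⁻¹ • (x - x₀)) :=
      ((hasFDerivAt_id _).const_smul h).const_add x₀
    have h2 : HasFDerivAt (polyFun p) (fderiv ℝ (polyFun p) x) (x₀ + h • h⁻¹ • (x - x₀)) := by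
      rw [hxx]; exact (polyFun_differentiable p x).hasFDerivAt
    have h3 := (HasFDerivAt.comp (h⁻¹ • (x - x₀)) h2 h1).fderiv
    have h4 : polyFun q = polyFun p ∘ fun y => x₀ + h • y := funext hqp
    rw [h4, h3]
    ext v; simp
  have hint : h ^ n * ∫ y in ball 0 c, polyFun q y ^ 2 =
      ∫ y in ball x₀ (c * h), polyFun p y ^ 2 := by
    have h1 : ∫ y in ball x₀ (c * h), polyFun p y ^ 2 =
        ∫ y in ball 0 (c * h), polyFun p (x₀ + y) ^ 2 := by
      rw [← (measurePreserving_add_left volume x₀).setIntegral_preimage_emb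
        (measurableEmbedding_addLeft x₀)]
      congr 2
      ext y; simp [dist_eq_norm]
    have h2 := Measure.setIntegral_comp_smul_of_pos (volume : Measure (EuclideanSpace ℝ (Fin n)))
      (fun y => polyFun p (x₀ + y) ^ 2) (ball 0 c) hh
    simp only [← hqp] at h2
    rw [h2, h1, _root_.smul_ball hh.ne', smul_zero, Real.norm_of_nonneg hh.le, finrank_euclideanSpace_fin,
      smul_eq_mul, mul_inv_cancel_left₀ (by positivity), mul_comm c h]
  have h5 := H q hq _ hx'
  rw [hfd, norm_smul, Real.norm_of_nonneg hh.le, mul_pow] at h5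
  rw [← hint, mul_left_comm K]
  exact mul_le_mul_of_nonneg_left h5 (pow_nonneg hh.le n)

/-- Inverse estimate on shape-regular elements: `h² ‖∇χ‖²_{L²(T)} ≤ K ‖χ‖²_{L²(T)}` for
polynomials of degree at most `k`. -/
theorem element_inverse_estimate (n k : ℕ) {c : ℝ} (hc : 0 < c) :
    ∃ K : ℝ, 0 < K ∧ ∀ p : MvPolynomial (Fin n) ℝ, p.totalDegree ≤ k →
      ∀ (T : Set (EuclideanSpace ℝ (Fin n))) (x₀ : EuclideanSpace ℝ (Fin n)) (h : ℝ), 0 < h →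
        IsShapeReg T x₀ h c →
        h ^ 2 * ∫ x in T, ‖fderiv ℝ (polyFun p) x‖ ^ 2 ≤ K * ∫ x in T, polyFun p x ^ 2 := by
  obtain ⟨K, hK, H⟩ := scaled_inverse_estimate n k hc
  have hV : 0 < volume.real (closedBall (0 : EuclideanSpace ℝ (Fin n)) 1) :=
    ENNReal.toReal_pos (measure_closedBall_pos _ _ one_pos).ne' measure_closedBall_lt_top.ne
  refine ⟨K * volume.real (closedBall (0 : EuclideanSpace ℝ (Fin n)) 1), by positivity,
    fun p hp T x₀ h hh ⟨hconv, hbd, hin, hout⟩ => ?_⟩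
  have hI : IntegrableOn (fun x => polyFun p x ^ 2) (closedBall x₀ h) :=
    (((polyFun_contDiff p).continuous.pow 2).continuousOn).integrableOn_compact
      (isCompact_closedBall _ _)
  have hI' : IntegrableOn (fun x => ‖fderiv ℝ (polyFun p) x‖ ^ 2) (closedBall x₀ h) :=
    ((((polyFun_contDiff p).continuous_fderiv one_ne_zero).norm.pow 2).continuousOn).integrableOn_compact
      (isCompact_closedBall _ _)
  set J := ∫ x in T, polyFun p x ^ 2
  have hJ : ∫ y in ball x₀ (c * h), polyFun p y ^ 2 ≤ J :=
    setIntegral_mono_set (hI.mono_set hout) (Filter.Eventually.of_forall fun _ => sq_nonneg _)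
      hin.eventuallyLE
  have hpt : ∀ x ∈ closedBall x₀ h,
      ‖fderiv ℝ (polyFun p) x‖ ^ 2 ≤ K * J / (h ^ n * h ^ 2) := by
    intro x hx
    rw [le_div_iff₀ (by positivity)]
    calc _ = h ^ n * (h ^ 2 * ‖fderiv ℝ (polyFun p) x‖ ^ 2) := by ring
      _ ≤ _ := H p hp x₀ h hh x hx
      _ ≤ _ := by gcongr
  have hvol : volume.real (closedBall x₀ h) =
      h ^ n * volume.real (closedBall (0 : EuclideanSpace ℝ (Fin n)) 1) := by
    rw [Measure.addHaar_real_closedBall' _ _ hh.le, finrank_euclideanSpace_fin]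
  calc h ^ 2 * ∫ x in T, ‖fderiv ℝ (polyFun p) x‖ ^ 2
      ≤ h ^ 2 * ∫ x in closedBall x₀ h, ‖fderiv ℝ (polyFun p) x‖ ^ 2 := by
        exact mul_le_mul_of_nonneg_left (setIntegral_mono_set hI'
          (Filter.Eventually.of_forall fun _ => sq_nonneg _) hout.eventuallyLE) (sq_nonneg h)
    _ ≤ h ^ 2 * ∫ x in closedBall x₀ h, K * J / (h ^ n * h ^ 2) := by
        refine mul_le_mul_of_nonneg_left ?_ (sq_nonneg h)
        exact setIntegral_mono_on hI' (integrableOn_const measure_closedBall_lt_top.ne)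
          measurableSet_closedBall hpt
    _ = _ := by
        rw [setIntegral_const, hvol, smul_eq_mul]
        field_simp

/-! ### The cutoff function and its mean -/

/-- A function whose gradient is bounded by `δ` on a convex set of diameter at most `2h` deviates
from its mean by at most `2hδ`. -/
theorem abs_mean_sub_le {n : ℕ} {T : Set (EuclideanSpace ℝ (Fin n))}
    {x₀ : EuclideanSpace ℝ (Fin n)} {h δ : ℝ} (hT : Convex ℝ T) (hout : T ⊆ closedBall x₀ h)
    (hpos : volume T ≠ 0) {ω : EuclideanSpace ℝ (Fin n) → ℝ} (hω : ContDiff ℝ 1 ω)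
    (hδ : 0 ≤ δ) (hb : ∀ x ∈ T, ‖fderiv ℝ ω x‖ ≤ δ) {x : EuclideanSpace ℝ (Fin n)} (hx : x ∈ T) :
    |(volume T).toReal⁻¹ * (∫ y in T, ω y) - ω x| ≤ 2 * h * δ := by
  have hfin : volume T ≠ ⊤ := ((measure_mono hout).trans_lt measure_closedBall_lt_top).ne
  have key : (⨍ y in T, ω y) ∈ closedBall (ω x) (2 * h * δ) := by
    refine (convex_closedBall _ _).set_average_mem isClosed_closedBall hpos hfin ?_
      ((hω.continuous.continuousOn.integrableOn_compact (isCompact_closedBall x₀ h)).mono_set hout)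
    filter_upwards [ae_restrict_mem₀ (hT.nullMeasurableSet volume)] with y hy
    rw [mem_closedBall, dist_eq_norm]
    refine (hT.norm_image_sub_le_of_norm_fderiv_le
      (fun z _ => hω.differentiable one_ne_zero z) hb hx hy).trans ?_
    have h1 : ‖y - x‖ ≤ 2 * h := by
      rw [← dist_eq_norm]
      have h2 := dist_triangle_right y x x₀
      have h3 := hout hx
      have h4 := hout hy
      rw [mem_closedBall] at h3 h4
      linarith
    rw [mul_comm]
    gcongr
  rw [setAverage_eq] at key
  simpa [dist_eq_norm, Measure.real] using key

/-- **Estimate (2.6) in the proof of the improved superapproximation theorem:**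
with `ω̂` the mean value of `ω` over `T`, one has
`‖∇((ω̂ − ω)χ)‖_{L²(T)} ≤ C d⁻¹ ‖χ‖_{L²(T)}`, with `C = C(n, r, c₁)`,
under the bounds `|ω|_{W^j_∞(T)} ≤ d^{-j}` for `j = 0, 1`. -/
theorem mean_cutoff_gradient_estimate
    (n r : ℕ) (hn : 1 ≤ n) (hr : 1 ≤ r) (c₁ : ℝ) (hc₁ : 0 < c₁) (hc₁' : c₁ ≤ 1) :
    ∃ C : ℝ, 0 < C ∧
      ∀ (T : Set (EuclideanSpace ℝ (Fin n))) (x₀ : EuclideanSpace ℝ (Fin n)) (h d : ℝ),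
        IsShapeReg T x₀ h c₁ → 0 < d → h ≤ d →
        ∀ ω : EuclideanSpace ℝ (Fin n) → ℝ, ContDiff ℝ (⊤ : ℕ∞) ω →
          (∀ j : ℕ, j ≤ 1 → ∀ x ∈ T, ‖iteratedFDeriv ℝ j ω x‖ ≤ d ^ (-(j : ℤ))) →
          ∀ χ : EuclideanSpace ℝ (Fin n) → ℝ, IsPolyDeg χ (r - 1) →
            gradL2norm T
                (fun x => ((volume T).toReal⁻¹ * (∫ y in T, ω y) - ω x) * χ x) ≤
              C * d⁻¹ * L2norm T χ := by
  obtain ⟨K, hK, H⟩ := element_inverse_estimate n (r - 1) hc₁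
  refine ⟨√(8 * K + 2), by positivity, fun T x₀ h d hT hd hhd ω hω hb χ hχ => ?_⟩
  obtain ⟨p, hp, hpχ⟩ := hχ
  obtain rfl : χ = polyFun p := funext hpχ
  have hTc := hT.1
  have hout := hT.2.2.2
  simp only [gradL2norm, L2norm, ← Real.sqrt_eq_rpow]
  rcases le_or_gt h 0 with hh | hh
  · -- For `h ≤ 0` the element has at most one point, hence is negligible since `n ≥ 1`.
    have : Nonempty (Fin n) := ⟨⟨0, hn⟩⟩
    have h0 : volume T = 0 := by
      refine measure_mono_null (hout.trans (closedBall_subset_closedBall hh)) ?_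
      simp
    rw [Measure.restrict_eq_zero.2 h0]
    simp
  have hpos : volume T ≠ 0 := fun h0 =>
    (measure_ball_pos volume x₀ (mul_pos hc₁ hh)).ne' (measure_mono_null hT.2.2.1 h0)
  have hω1 : ContDiff ℝ 1 ω := hω.of_le (by exact_mod_cast le_top)
  have hgrad : ∀ x ∈ T, ‖fderiv ℝ ω x‖ ≤ d⁻¹ := fun x hx => by
    simpa [norm_iteratedFDeriv_one] using hb 1 le_rfl x hx
  set m := (volume T).toReal⁻¹ * (∫ y in T, ω y)
  have hmean : ∀ x ∈ T, |m - ω x| ≤ 2 * h * d⁻¹ := fun x hx =>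
    abs_mean_sub_le hTc hout hpos hω1 (by positivity) hgrad hx
  set P := polyFun p
  have hPc : ContDiff ℝ 1 P := polyFun_contDiff p
  have hpt : ∀ x ∈ T, ‖fderiv ℝ (fun x => (m - ω x) * P x) x‖ ^ 2 ≤
      (d⁻¹) ^ 2 * (8 * (h ^ 2 * ‖fderiv ℝ P x‖ ^ 2) + 2 * P x ^ 2) := by
    intro x hx
    have hωx : DifferentiableAt ℝ ω x := hω1.differentiable one_ne_zero x
    have hPx : DifferentiableAt ℝ P x := hPc.differentiable one_ne_zero x
    have h1 : fderiv ℝ (fun x => (m - ω x) * P x) x =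
        (m - ω x) • fderiv ℝ P x - P x • fderiv ℝ ω x := by
      refine ((hωx.hasFDerivAt.const_sub m).mul hPx.hasFDerivAt).fderiv.trans ?_
      simp [sub_eq_add_neg]
    have h2 : ‖fderiv ℝ (fun x => (m - ω x) * P x) x‖ ≤
        2 * h * d⁻¹ * ‖fderiv ℝ P x‖ + |P x| * d⁻¹ := by
      rw [h1]
      refine (norm_sub_le _ _).trans ?_
      rw [norm_smul, norm_smul, Real.norm_eq_abs, Real.norm_eq_abs]
      gcongr
      · exact hmean x hx
      · exact hgrad x hx
    have h3 := pow_le_pow_left₀ (norm_nonneg _) h2 2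
    have h4 : |P x| ^ 2 = P x ^ 2 := sq_abs _
    rw [← h4]
    nlinarith [sq_nonneg (2 * h * d⁻¹ * ‖fderiv ℝ P x‖ - |P x| * d⁻¹)]
  have hmono : ∀ {f : EuclideanSpace ℝ (Fin n) → ℝ}, Continuous f → IntegrableOn f T := fun hf =>
    (hf.continuousOn.integrableOn_compact (isCompact_closedBall x₀ h)).mono_set hout
  have hg1 : Continuous fun x => ‖fderiv ℝ P x‖ ^ 2 :=
    (hPc.continuous_fderiv one_ne_zero).norm.pow 2
  have hg2 : Continuous fun x => P x ^ 2 := hPc.continuous.pow 2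
  have hF : ContDiff ℝ 1 fun x => (m - ω x) * P x := (contDiff_const.sub hω1).mul hPc
  have hg3 : Continuous fun x => ‖fderiv ℝ (fun x => (m - ω x) * P x) x‖ ^ 2 :=
    (hF.continuous_fderiv one_ne_zero).norm.pow 2
  have hfinal : ∫ x in T, ‖fderiv ℝ (fun x => (m - ω x) * P x) x‖ ^ 2 ≤
      (8 * K + 2) * (d⁻¹) ^ 2 * ∫ x in T, P x ^ 2 := by
    calc _ ≤ ∫ x in T, (d⁻¹) ^ 2 * (8 * (h ^ 2 * ‖fderiv ℝ P x‖ ^ 2) + 2 * P x ^ 2) := by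
          refine integral_mono_ae (hmono hg3) (hmono (by fun_prop)) ?_
          filter_upwards [ae_restrict_mem₀ (hTc.nullMeasurableSet volume)] with x hx
          exact hpt x hx
      _ = (d⁻¹) ^ 2 * (8 * (h ^ 2 * ∫ x in T, ‖fderiv ℝ P x‖ ^ 2) + 2 * ∫ x in T, P x ^ 2) := by
          rw [integral_const_mul, integral_add (hmono (by fun_prop)) (hmono (by fun_prop)),
            integral_const_mul, integral_const_mul, integral_const_mul]
      _ ≤ (d⁻¹) ^ 2 * (8 * (K * ∫ x in T, P x ^ 2) + 2 * ∫ x in T, P x ^ 2) := by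
          gcongr (d⁻¹) ^ 2 * (8 * ?_ + _)
          exact H p hp T x₀ h hh hT
      _ = _ := by ring
  calc _ ≤ √((8 * K + 2) * (d⁻¹) ^ 2 * ∫ x in T, P x ^ 2) := Real.sqrt_le_sqrt hfinal
    _ = _ := by
      rw [Real.sqrt_mul (by positivity), Real.sqrt_mul (by positivity),
        Real.sqrt_sq (by positivity)]
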